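/- arXiv:2508.02996 — 4 statements merged into one kernel-verified Lean document; each statement's English description precedes it below -/
import Mathlib

section
/- Let k and n be positive integers, let A_1, A_2, A_3 be finite sets each of cardinality at most q^n, and suppose there exist maps φ_1 : F^k × F^k × F^k → A_1, φ_2 : F^k × F^k → A_2, φ_3 : F^k × F^k → A_3 and a map ψ : A_1 × A_2 × A_3 → F^k × F^k such that ψ(φ_1(x_1,x_2,x_3), φ_2(x_1,x_3), φ_3(x_2,x_3)) = (x_1 + x_2, x_3) for all x_1, x_2, x_3 ∈ F^k. Then 4n ≥ 3k. -/
/-- Converse for the model `(3,3,Ω₂,T₂)`: if encoder 1 observes `(x₁,x₂,x₃)`, encoder 2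
observes `(x₁,x₃)`, encoder 3 observes `(x₂,x₃)`, each encoder outputs at most `q^n`
values, and the decoder computes `(x₁+x₂, x₃)` with zero error, then `4n ≥ 3k`. -/
theorem stmt9 (F : Type*) [Field F] [Fintype F] (k n : ℕ) (hk : 0 < k) (hn : 0 < n)
    (A₁ A₂ A₃ : Type*) [Fintype A₁] [Fintype A₂] [Fintype A₃]
    (h₁ : Fintype.card A₁ ≤ Fintype.card F ^ n)
    (h₂ : Fintype.card A₂ ≤ Fintype.card F ^ n)
    (h₃ : Fintype.card A₃ ≤ Fintype.card F ^ n)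
    (φ₁ : (Fin k → F) → (Fin k → F) → (Fin k → F) → A₁)
    (φ₂ : (Fin k → F) → (Fin k → F) → A₂)
    (φ₃ : (Fin k → F) → (Fin k → F) → A₃)
    (ψ : A₁ → A₂ → A₃ → (Fin k → F) × (Fin k → F))
    (hdec : ∀ x₁ x₂ x₃ : Fin k → F,
      ψ (φ₁ x₁ x₂ x₃) (φ₂ x₁ x₃) (φ₃ x₂ x₃) = (x₁ + x₂, x₃)) :
    3 * k ≤ 4 * n := by
  -- A representative of the fibre of `φ₃ · c` through `x₂`, depending only on `φ₃ x₂ c`.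
  let rep : A₃ → (Fin k → F) → (Fin k → F) := fun a c => Function.invFun (fun y => φ₃ y c) a
  have hrep : ∀ x c, φ₃ (rep (φ₃ x c) c) c = φ₃ x c := fun x c =>
    Function.invFun_eq (f := fun y => φ₃ y c) ⟨x, rfl⟩
  let code : (Fin k → F) × (Fin k → F) × (Fin k → F) → A₁ × A₂ × A₃ × A₁ := fun p =>
    (φ₁ p.1 (rep (φ₃ p.2.1 p.2.2) p.2.2) p.2.2, φ₂ p.1 p.2.2, φ₃ p.2.1 p.2.2,
      φ₁ 0 p.2.1 p.2.2)
  have hcode : Function.Injective code := by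
    rintro ⟨x, y, c⟩ ⟨x', y', c'⟩ h
    simp only [code, Prod.mk.injEq] at h
    obtain ⟨e₁, e₂, e₃, e₄⟩ := h
    have d := hdec x (rep (φ₃ y c) c) c
    rw [hrep, e₁, e₂, e₃] at d
    have d' := hdec x' (rep (φ₃ y' c') c') c'
    rw [hrep, d, Prod.mk.injEq] at d'
    obtain ⟨hsum, rfl⟩ := d'
    have hx : x = x' := add_right_cancel hsum
    have t := hdec 0 y c
    rw [e₃, e₄, hdec 0 y' c, Prod.mk.injEq] at t
    have hy : y = y' := (add_left_cancel t.1).symm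
    rw [hx, hy]
  have hcard := Fintype.card_le_of_injective code hcode
  simp only [Fintype.card_prod, Fintype.card_fun, Fintype.card_fin] at hcard
  have hpow : Fintype.card F ^ (3 * k) ≤ Fintype.card F ^ (4 * n) := by
    calc Fintype.card F ^ (3 * k)
        = Fintype.card F ^ k * (Fintype.card F ^ k * Fintype.card F ^ k) := by ring
      _ ≤ _ := hcard
      _ ≤ Fintype.card F ^ n * (Fintype.card F ^ n *
            (Fintype.card F ^ n * Fintype.card F ^ n)) := by gcongr
      _ = Fintype.card F ^ (4 * n) := by ring
  exact (Nat.pow_le_pow_iff_right Fintype.one_lt_card).mp hpow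
end

section
/- Let k and n be positive integers, let A_1, A_2, A_3 be finite sets each of cardinality at most q^n, and suppose there exist maps φ_1 : F^k × F^k × F^k → A_1, φ_2 : F^k × F^k → A_2, φ_3 : F^k × F^k → A_3 and a map ψ : A_1 × A_2 × A_3 → F^k × F^k such that ψ(φ_1(x_1,x_2,x_3), φ_2(x_1,x_3), φ_3(x_2,x_3)) = (x_1 + x_2, x_3) for all x_1, x_2, x_3 ∈ F^k. Then for every b ∈ F^k, the set {φ_2(x_1, b) : x_1 ∈ F^k} has cardinality N satisfying q^n · N ≥ q^k. -/
/-- Auxiliary claim in the converse for the model `(3,3,Ω₂,T₂)`: under the same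
hypotheses as the converse, for every `b ∈ F^k` the set `{φ₂(x₁,b) : x₁ ∈ F^k}` has
cardinality `N` satisfying `q^n · N ≥ q^k`. -/
theorem stmt10 (F : Type*) [Field F] [Fintype F] (k n : ℕ) (hk : 0 < k) (hn : 0 < n)
    (A₁ A₂ A₃ : Type*) [Fintype A₁] [Fintype A₂] [Fintype A₃]
    (h₁ : Fintype.card A₁ ≤ Fintype.card F ^ n)
    (h₂ : Fintype.card A₂ ≤ Fintype.card F ^ n)
    (h₃ : Fintype.card A₃ ≤ Fintype.card F ^ n)
    (φ₁ : (Fin k → F) → (Fin k → F) → (Fin k → F) → A₁)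
    (φ₂ : (Fin k → F) → (Fin k → F) → A₂)
    (φ₃ : (Fin k → F) → (Fin k → F) → A₃)
    (ψ : A₁ → A₂ → A₃ → (Fin k → F) × (Fin k → F))
    (hdec : ∀ x₁ x₂ x₃ : Fin k → F,
      ψ (φ₁ x₁ x₂ x₃) (φ₂ x₁ x₃) (φ₃ x₂ x₃) = (x₁ + x₂, x₃)) :
    ∀ b : Fin k → F,
      Fintype.card F ^ k
        ≤ Fintype.card F ^ n * (Set.range fun x₁ : Fin k → F => φ₂ x₁ b).ncard := by
  intro b
  have hinj : Function.Injective fun x₁ : Fin k → F =>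
      ((φ₁ x₁ 0 b, ⟨φ₂ x₁ b, x₁, rfl⟩) : A₁ × Set.range fun x₁ : Fin k → F => φ₂ x₁ b) := by
    intro x y hxy
    have hxy₁ : φ₁ x 0 b = φ₁ y 0 b := congrArg Prod.fst hxy
    have hxy₂ : φ₂ x b = φ₂ y b := congrArg (fun p => p.2.val) hxy
    have hx := hdec x 0 b
    rw [hxy₁, hxy₂, hdec y 0 b] at hx
    simpa using (congrArg Prod.fst hx).symm
  have hcard := Nat.card_le_card_of_injective _ hinj
  rw [Nat.card_prod, Nat.card_coe_set_eq, Nat.card_eq_fintype_card,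
    Nat.card_eq_fintype_card, Fintype.card_fun, Fintype.card_fin] at hcard
  exact hcard.trans (Nat.mul_le_mul_right _ h₁)
end

section
/- There exist maps φ_1 : F^4 × F^4 → F^3, φ_2 : F^4 × F^4 → F^3, φ_3 : F^4 × F^4 → F^3 and a map ψ : F^3 × F^3 × F^3 → F^4 × F^4 such that ψ(φ_1(x_1,x_2), φ_2(x_1,x_3), φ_3(x_2,x_3)) = (x_1 + x_2, x_3) for all x_1, x_2, x_3 ∈ F^4. -/
/-- Achievability of coding rate `3/4` for the model `(3,3,Ω₁,T₂)`: there is an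
admissible 4-shot code using 3 field symbols per encoder, where encoder 1 observes
`(x₁,x₂)`, encoder 2 observes `(x₁,x₃)`, encoder 3 observes `(x₂,x₃)`, and the decoder
computes `(x₁+x₂, x₃)` with zero error. -/
theorem stmt11 (F : Type*) [Field F] [Fintype F] :
    ∃ (φ₁ φ₂ φ₃ : (Fin 4 → F) → (Fin 4 → F) → (Fin 3 → F))
      (ψ : (Fin 3 → F) → (Fin 3 → F) → (Fin 3 → F) → (Fin 4 → F) × (Fin 4 → F)),
      ∀ x₁ x₂ x₃ : Fin 4 → F,
        ψ (φ₁ x₁ x₂) (φ₂ x₁ x₃) (φ₃ x₂ x₃) = (x₁ + x₂, x₃) := by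
  refine ⟨fun a b => ![a 0 + b 0, a 1 + b 1, a 2 + b 2], fun a c => ![a 3, c 0, c 1],
    fun b c => ![b 3, c 2, c 3],
    fun u v w => (![u 0, u 1, u 2, v 0 + w 0], ![v 1, v 2, w 1, w 2]), fun a b c => ?_⟩
  ext i <;> fin_cases i <;> rfl
end

section
/- There exist maps φ_1 : F^3 × F^3 → F^2, φ_2 : F^3 × F^3 → F^2, φ_3 : F^3 × F^3 → F^2 and a map ψ : F^2 × F^2 × F^2 → F^3 × F^3 such that ψ(φ_1(x_1,x_2), φ_2(x_1,x_3), φ_3(x_2,x_3)) = (x_1 + x_3, x_2 + x_3) for all x_1, x_2, x_3 ∈ F^3. -/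
/-- Achievability of coding rate `2/3` for the model `(3,3,Ω*,T₁)`: there is an
admissible 3-shot code using 2 field symbols per encoder, where encoder 1 observes
`(x₁,x₂)`, encoder 2 observes `(x₁,x₃)`, encoder 3 observes `(x₂,x₃)`, and the decoder
computes `(x₁+x₃, x₂+x₃)` with zero error. -/
theorem stmt14 (F : Type*) [Field F] [Fintype F] :
    ∃ (φ₁ φ₂ φ₃ : (Fin 3 → F) → (Fin 3 → F) → (Fin 2 → F))
      (ψ : (Fin 2 → F) → (Fin 2 → F) → (Fin 2 → F) → (Fin 3 → F) × (Fin 3 → F)),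
      ∀ x₁ x₂ x₃ : Fin 3 → F,
        ψ (φ₁ x₁ x₂) (φ₂ x₁ x₃) (φ₃ x₂ x₃) = (x₁ + x₃, x₂ + x₃) := by
  refine ⟨fun x₁ x₂ => ![x₁ 0 - x₂ 0, x₁ 1 - x₂ 1], fun x₁ x₃ => ![x₁ 0 + x₃ 0, x₁ 2 + x₃ 2],
    fun x₂ x₃ => ![x₂ 1 + x₃ 1, x₂ 2 + x₃ 2],
    fun u v w => (![v 0, u 1 + w 0, v 1], ![v 0 - u 0, w 0, w 1]), fun x₁ x₂ x₃ => ?_⟩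
  ext i <;> fin_cases i <;> simp <;> ring
end
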